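/- Let G be a finite group and M a G-module (an abelian group with an action of G by group automorphisms) whose underlying abelian group is finitely generated. Then for every integer n ≥ 1 the group cohomology group H^n(G, M) is finite. -/

import Mathlib

/-- The representation of `G` on `M` over `ℤ` associated to an action of `G` on the abelian
group `M` by additive group automorphisms: this realizes the `G`-module `M` as an object of
`Rep ℤ G`, so that Mathlib's `groupCohomology` computes `H^n(G, M)`. -/
noncomputable def repOfGModule (G M : Type) [Group G] [AddCommGroup M] [DistribMulAction G M] :
    Rep ℤ G :=
  Rep.of
    { toFun := fun g => (DistribMulAction.toAddMonoidHom M g).toIntLinearMap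
      map_one' := by
        ext m
        simp
      map_mul' := by
        intro g h
        ext m
        simp [mul_smul] }

open CategoryTheory in
/-- Summing a cochain over its last argument; `d` of it in terms of `d` of the cochain. -/
theorem sum_last_d {k G : Type} [CommRing k] [Group G] [Fintype G] (A : Rep.{0} k G) (n : ℕ)
    (f : (Fin (n + 1) → G) → A) (g : Fin (n + 1) → G) :
    ∑ x : G, (inhomogeneousCochains.d A (n + 1)).hom f (Fin.snoc (α := fun _ => G) g x) =
      (inhomogeneousCochains.d A n).hom
        (fun g' : Fin n → G => ∑ x : G, f (Fin.snoc (α := fun _ => G) g' x)) g +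
      (-1 : k) ^ n • (Fintype.card G : k) • f g := by
  simp only [inhomogeneousCochains.d_hom_apply]
  rw [Finset.sum_add_distrib, map_sum]
  refine Eq.trans ?_ (add_assoc _ _ _).symm
  congr 1
  · refine Finset.sum_congr rfl fun x _ => ?_
    have h0 : (Fin.snoc (α := fun _ => G) g x : Fin (n + 2) → G) 0 = g 0 := by
      exact Fin.snoc_castSucc (α := fun _ => G) x g 0
    have h1 : (fun i : Fin (n + 1) => (Fin.snoc (α := fun _ => G) g x : Fin (n + 2) → G) i.succ)
        = Fin.snoc (α := fun _ => G) (fun i : Fin n => g i.succ) x := by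
      funext i
      refine Fin.lastCases ?_ (fun i => ?_) i
      · simp [Fin.succ_last]
      · rw [Fin.succ_castSucc]
        simp only [Fin.snoc_castSucc]
    rw [h0, h1]
  · simp only [Finset.smul_sum]
    rw [Finset.sum_comm, Fin.sum_univ_castSucc]
    congr 1
    · refine Finset.sum_congr rfl fun j _ => ?_
      refine Fin.lastCases ?_ (fun j => ?_) j
      · refine Fintype.sum_equiv (Equiv.mulLeft (g (Fin.last n))) _ _ fun x => ?_
        have : Fin.contractNth (Fin.last n).castSucc (· * ·)
            (Fin.snoc (α := fun _ => G) g x : Fin (n + 2) → G) =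
            Fin.snoc (α := fun _ => G) (Fin.contractNth (Fin.last n) (· * ·) g)
              (g (Fin.last n) * x) := by
          funext i
          refine Fin.lastCases ?_ (fun i => ?_) i
          · rw [Fin.contractNth_apply_of_eq _ _ _ _ (by simp)]
            simp only [Fin.snoc_castSucc, Fin.snoc_last, Fin.succ_last]
          · rw [Fin.contractNth_apply_of_lt _ _ _ _ (by simp)]
            simp only [Fin.snoc_castSucc]
            rw [Fin.contractNth_apply_of_lt _ _ _ _ (by simp)]
        rw [this]
        rfl
      · refine Finset.sum_congr rfl fun x _ => ?_
        have : Fin.contractNth j.castSucc.castSucc (· * ·)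
            (Fin.snoc (α := fun _ => G) g x : Fin (n + 2) → G) =
            Fin.snoc (α := fun _ => G) (Fin.contractNth j.castSucc (· * ·) g) x := by
          funext i
          refine Fin.lastCases ?_ (fun i => ?_) i
          · rw [Fin.contractNth_apply_of_gt _ _ _ _ (by simp)]
            simp only [Fin.snoc_last, Fin.succ_last]
          · simp only [Fin.snoc_castSucc, Fin.contractNth, Fin.succ_castSucc, Fin.val_castSucc]
        rw [this]
        rfl
    · have : ∀ x : G, Fin.contractNth (Fin.last (n + 1)) (· * ·)
            (Fin.snoc (α := fun _ => G) g x : Fin (n + 2) → G) = g := by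
        intro x
        funext i
        rw [Fin.contractNth_apply_of_lt _ _ _ _ i.isLt]
        simp only [Fin.snoc_castSucc]
      simp only [this, Finset.sum_const, Finset.card_univ, Fin.val_last]
      rw [smul_comm, ← Nat.cast_smul_eq_nsmul k]
      congr 1
      rw [pow_succ, pow_succ]
      simp

open CategoryTheory groupCohomology in
theorem card_smul_groupCohomology {k G : Type} [CommRing k] [Group G] [Fintype G] (A : Rep.{0} k G) (n : ℕ)
    (x : groupCohomology A (n + 1)) : (Fintype.card G : k) • x = 0 := by
  induction x using groupCohomology_induction_on with
  | h z =>
    set f : (Fin (n + 1) → G) → A := iCocycles A (n + 1) z with hf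
    have hd : (inhomogeneousCochains.d A (n + 1)).hom f = 0 := by
      have := congrArg (fun φ => φ.hom z) ((inhomogeneousCochains A).iCycles_d (n + 1) (n + 2))
      rw [inhomogeneousCochains.d_def] at this
      exact this
    let h : (Fin n → G) → A := fun g' => ∑ x : G, f (Fin.snoc (α := fun _ => G) g' x)
    have key : (inhomogeneousCochains.d A n).hom ((-1 : k) ^ (n + 1) • h) =
        (Fintype.card G : k) • f := by
      rw [map_smul]
      funext g
      have := sum_last_d A n f g
      rw [hd] at this
      have h0 : ∑ x : G, (0 : (Fin (n + 2) → G) → A) (Fin.snoc (α := fun _ => G) g x) = 0 := by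
        simp
      have h2 := eq_neg_of_add_eq_zero_left (this.symm.trans h0)
      change (-1 : k) ^ (n + 1) • ((inhomogeneousCochains.d A n).hom h g) = _
      rw [h2, smul_neg, smul_smul, ← pow_add, ← neg_smul]
      have : -(-1 : k) ^ (n + 1 + n) = 1 := by
        rw [show n + 1 + n = 2 * n + 1 by ring, pow_succ, pow_mul]; simp
      rw [this, one_smul]
      rfl
    have hz : (Fintype.card G : k) • z = toCocycles A n (n + 1) ((-1 : k) ^ (n + 1) • h) := by
      apply (ModuleCat.mono_iff_injective (iCocycles A (n + 1))).1 inferInstance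
      have h3 := congrArg (fun φ => φ.hom ((-1 : k) ^ (n + 1) • h))
        ((inhomogeneousCochains A).toCycles_i n (n + 1))
      rw [inhomogeneousCochains.d_def] at h3
      rw [map_smul]
      exact key.symm.trans h3.symm
    rw [← map_smul, hz]
    exact congrArg (fun φ => φ.hom ((-1 : k) ^ (n + 1) • h))
      ((inhomogeneousCochains A).toCycles_comp_homologyπ n (n + 1))

open CategoryTheory groupCohomology in
theorem module_finite_groupCohomology {k G : Type} [CommRing k] [IsNoetherianRing k] [Group G]
    [Finite G] (A : Rep.{0} k G) (hA : Module.Finite k A) (n : ℕ) :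
    Module.Finite k (groupCohomology A n) := by
  have hC : Module.Finite k ((Fin n → G) → A) := inferInstance
  have hC' : Module.Finite k ((inhomogeneousCochains A).X n) := hC
  have hZ : Module.Finite k (cocycles A n) :=
    Module.Finite.of_injective (iCocycles A n).hom
      ((ModuleCat.mono_iff_injective (iCocycles A n)).1 inferInstance)
  exact Module.Finite.of_surjective (groupCohomology.π A n).hom
      ((ModuleCat.epi_iff_surjective (groupCohomology.π A n)).1
        (inferInstanceAs (Epi ((inhomogeneousCochains A).homologyπ n))))

theorem isTorsion_groupCohomology {k G : Type} [CommRing k] [IsDomain k] [CharZero k] [Group G]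
    [Fintype G] (A : Rep.{0} k G) (n : ℕ) :
    Module.IsTorsion k (groupCohomology A (n + 1)) := by
  intro x
  exact ⟨⟨(Fintype.card G : k), mem_nonZeroDivisors_of_ne_zero (by simp)⟩,
    card_smul_groupCohomology A n x⟩

/-- If `G` is a finite group and `M` is a `G`-module whose underlying abelian group is
finitely generated, then `H^n(G, M)` is finite for every `n ≥ 1`. -/
theorem groupCohomology_finite_of_fg (G M : Type) [Group G] [Finite G] [AddCommGroup M]
    [DistribMulAction G M] (hfg : AddGroup.FG M) (n : ℕ) (hn : 1 ≤ n) :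
    Finite (groupCohomology (repOfGModule G M) n) := by
  have := Fintype.ofFinite G
  obtain ⟨n, rfl⟩ : ∃ m, n = m + 1 := ⟨n - 1, by omega⟩
  have hM : Module.Finite ℤ M := Module.Finite.iff_addGroup_fg.mpr hfg
  have hA := module_finite_groupCohomology (repOfGModule G M) hM (n + 1)
  exact @Module.finite_of_fg_torsion _ _ _ hA (isTorsion_groupCohomology (repOfGModule G M) n)
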